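/- Let M be a locally connected topological space and let (P_k)_{k∈ℕ} be an increasing sequence of open subsets of M, i.e. P_k ⊆ P_{k+1} for all k. Then the sequence of topological boundaries (∂P_k) has a Hausdorff closed limit, and this limit equals ∂(⋃_k P_k). -/

import Mathlib

/-!
Write `P` for the open set `⋃ k, P k`.

If `p ∈ ∂P`, local connectedness lets one test with connected neighbourhoods `V` of `p`. Such a `V`
meets `P`, hence meets `P k` for all large `k`, while `p ∈ V` lies outside every `P k`; being
connected, `V` meets `∂(P k)` for all large `k`. So `∂P` is contained in the lower limit.

The lower limit is contained in the upper one. Finally, a point `p` of the upper limit lies in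
`closure P`, because `∂(P k) ⊆ closure P`, and not in `P`: if `p ∈ P N`, then `P N` is a
neighbourhood of `p` missing `∂(P k)` for every `k ≥ N`.
-/

/-- The Hausdorff upper limit of a sequence of subsets. -/
def hausdorffUpperLimit {M : Type*} [TopologicalSpace M] (S : ℕ → Set M) : Set M :=
  {p | ∀ U ∈ nhds p, {k : ℕ | (U ∩ S k).Nonempty}.Infinite}

/-- The Hausdorff lower limit of a sequence of subsets. -/
def hausdorffLowerLimit {M : Type*} [TopologicalSpace M] (S : ℕ → Set M) : Set M :=
  {p | ∀ U ∈ nhds p, {k : ℕ | ¬ (U ∩ S k).Nonempty}.Finite}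

theorem hausdorffLowerLimit_subset_upperLimit {M : Type*} [TopologicalSpace M] (S : ℕ → Set M) :
    hausdorffLowerLimit S ⊆ hausdorffUpperLimit S := by
  intro p hp U hU
  have h := (hp U hU).infinite_compl
  simpa only [Set.compl_ofPred, not_not] using h

theorem frontier_iUnion_subset_lowerLimit {M : Type*} [TopologicalSpace M]
    [LocallyConnectedSpace M] (P : ℕ → Set M) (hopen : ∀ k, IsOpen (P k)) (hP : Monotone P) :
    frontier (⋃ k, P k) ⊆ hausdorffLowerLimit (fun k => frontier (P k)) := by
  intro p hp U hU
  rw [(isOpen_iUnion hopen).frontier_eq] at hp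
  obtain ⟨V, ⟨hVo, hpV, hVc⟩, hVU⟩ :=
    (LocallyConnectedSpace.open_connected_basis p).mem_iff.1 hU
  obtain ⟨x, hxV, hxP⟩ := mem_closure_iff.1 hp.1 V hVo hpV
  obtain ⟨N, hN⟩ := Set.mem_iUnion.1 hxP
  refine (Set.finite_lt_nat N).subset fun k hk => ?_
  by_contra hNk
  refine hk ?_
  have hxk : x ∈ P k := hP (not_lt.1 hNk) hN
  have hpk : p ∉ P k := fun h => hp.2 (Set.mem_iUnion_of_mem k h)
  have hmeet : (V ∩ frontier (P k)).Nonempty := by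
    rw [(hopen k).frontier_eq]
    by_contra hempty
    -- Otherwise the disjoint open sets `P k` and `(closure (P k))ᶜ` cover and both meet `V`.
    have hcl : ∀ y ∈ V, y ∉ P k → y ∉ closure (P k) := fun y hy hyk hyc =>
      hempty ⟨y, hy, hyc, hyk⟩
    obtain ⟨y, -, hy₁, hy₂⟩ := hVc.isPreconnected (P k) (closure (P k))ᶜ (hopen k)
      isClosed_closure.isOpen_compl (fun y hy => or_iff_not_imp_left.2 (hcl y hy))
      ⟨x, hxV, hxk⟩ ⟨p, hpV, hcl p hpV hpk⟩
    exact hy₂ (subset_closure hy₁)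
  exact hmeet.mono (Set.inter_subset_inter_left _ hVU)

theorem upperLimit_subset_frontier_iUnion {M : Type*} [TopologicalSpace M]
    (P : ℕ → Set M) (hopen : ∀ k, IsOpen (P k)) (hP : Monotone P) :
    hausdorffUpperLimit (fun k => frontier (P k)) ⊆ frontier (⋃ k, P k) := by
  intro p hp
  rw [(isOpen_iUnion hopen).frontier_eq]
  constructor
  · rw [← closure_closure, mem_closure_iff_nhds]
    intro U hU
    obtain ⟨k, x, hxU, hx⟩ := (hp U hU).nonempty
    exact ⟨x, hxU, closure_mono (Set.subset_iUnion P k) (frontier_subset_closure hx)⟩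
  · intro hpP
    obtain ⟨N, hN⟩ := Set.mem_iUnion.1 hpP
    refine hp (P N) ((hopen N).mem_nhds hN) ((Set.finite_lt_nat N).subset ?_)
    rintro k ⟨x, hxN, hx⟩
    by_contra hNk
    have hx' : x ∈ closure (P k) \ P k := (hopen k).frontier_eq ▸ hx
    exact hx'.2 (hP (not_lt.1 hNk) hxN)

theorem hausdorffLimit_frontiers_of_increasing_open {M : Type*} [TopologicalSpace M]
    [LocallyConnectedSpace M]
    (P : ℕ → Set M) (hopen : ∀ k, IsOpen (P k)) (hmono : ∀ k, P k ⊆ P (k + 1)) :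
    hausdorffUpperLimit (fun k => frontier (P k)) = frontier (⋃ k, P k) ∧
    hausdorffLowerLimit (fun k => frontier (P k)) = frontier (⋃ k, P k) := by
  have hP : Monotone P := monotone_nat_of_le_succ hmono
  have h₁ := frontier_iUnion_subset_lowerLimit P hopen hP
  have h₂ := hausdorffLowerLimit_subset_upperLimit (fun k => frontier (P k))
  have h₃ := upperLimit_subset_frontier_iUnion P hopen hP
  exact ⟨h₃.antisymm (h₁.trans h₂), (h₂.trans h₃).antisymm h₁⟩
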